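/- Let g_1,…,g_m, h_1,…,h_l ∈ ℝ[x], R > 0 with S(g) ∩ V(h) given by S(g) := {x : g_i(x) ≥ 0 ∀i} satisfying S(g) ⊆ {x : ‖x‖₂² ≤ R}. Set u := max_i ⌈g_i⌉, g̃_i := g_i·(1+‖x‖₂²)^{u-⌈g_i⌉} for i ∈ {1,…,m}, let L > 0 satisfy Σ_{i=1}^m g̃_i(x) ≤ L for all x ∈ S(g), and set g̃_{m+1} := L − Σ_{i=1}^m g̃_i and g̃_{m+2} := R − ‖x‖₂². Then: (a) {x ∈ ℝⁿ : g_i(x) ≥ 0 ∀i ≤ m, g̃_{m+1}(x) ≥ 0, g̃_{m+2}(x) ≥ 0} = S(g); and (b) for every integer k ≥ max{⌈g_i⌉ (i ≤ m+2), ⌈h_j⌉} there exist ξ > 0, diagonal matrices G_0 (indexed by ℕ^n_k), G_i (indexed by ℕ^n_{k-⌈g_i⌉}, i ≤ m), G_{m+1} (indexed by ℕ^n_{k-u}), G_{m+2} (indexed by ℕ^n_{k-1}), all with diagonal entries ≥ 1, and polynomials ψ_j of degree ≤ 2(k−⌈h_j⌉), such that ξ = v_k^T G_0 v_k + Σ_{i=1}^m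 g_i · v_{k-⌈g_i⌉}^T G_i v_{k-⌈g_i⌉} + g̃_{m+1}· v_{k-u}^T G_{m+1} v_{k-u} + g̃_{m+2}· v_{k-1}^T G_{m+2} v_{k-1} + Σ_{j=1}^l h_j ψ_j holds in ℝ[x]. -/

import Mathlib

open MvPolynomial

/-- `⌈p⌉ := ⌈deg(p)/2⌉`. -/
noncomputable def halfCeil {n : ℕ} (p : MvPolynomial (Fin n) ℝ) : ℕ :=
  (p.totalDegree + 1) / 2

/-- The finite set `ℕ^n_d` of multi-indices `α ∈ ℕ^n` with `|α| ≤ d`. -/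
noncomputable def degLE (n d : ℕ) : Finset (Fin n →₀ ℕ) :=
  (Finset.Iic (Finsupp.equivFunOnFinite.symm fun _ : Fin n => d)).filter
    fun α => (∑ i, α i) ≤ d

/-- The polynomial `v_d^T G v_d = Σ_{α,β ∈ ℕ^n_d} G_{α,β} x^{α+β}` associated with a
matrix `G` indexed by `ℕ^n_d`. -/
noncomputable def quadForm (n d : ℕ)
    (G : Matrix ↥(degLE n d) ↥(degLE n d) ℝ) : MvPolynomial (Fin n) ℝ :=
  ∑ α : ↥(degLE n d), ∑ β : ↥(degLE n d), monomial (α.1 + β.1) (G α β)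

/-- The moment matrix `M_d(y)`, with entries `(M_d(y))_{α,β} = y_{α+β}`. -/
noncomputable def momentMat (n d : ℕ) (y : (Fin n →₀ ℕ) → ℝ) :
    Matrix ↥(degLE n d) ↥(degLE n d) ℝ :=
  Matrix.of fun α β => y (α.1 + β.1)

/-- The localizing matrix `M_d(q·y)`, with entries `Σ_γ q_γ y_{α+β+γ}`. -/
noncomputable def locMat (n d : ℕ) (q : MvPolynomial (Fin n) ℝ)
    (y : (Fin n →₀ ℕ) → ℝ) : Matrix ↥(degLE n d) ↥(degLE n d) ℝ :=
  Matrix.of fun α β => ∑ γ ∈ q.support, coeff γ q * y (α.1 + β.1 + γ)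

/-- A (diagonal) matrix all of whose off-diagonal entries vanish and whose diagonal entries
are all ≥ 1. -/
def DiagGE1 {ι : Type*} (M : Matrix ι ι ℝ) : Prop :=
  (∀ a b, a ≠ b → M a b = 0) ∧ ∀ a, 1 ≤ M a a

/-! Write `t = 1 + ‖x‖²` and `M = R + 1`, so that `g̃_{m+2} = M - t`. Each power `t ^ d` is a
diagonal quadratic form with multinomial, hence positive integer, diagonal entries. Taking the forms
`t ^ (k - ⌈g_i⌉)` and `t ^ (k - u)` as multipliers of `g_i` and `g̃_{m+1}` makes their contributions
add up to `L t ^ (k - u)`. It remains to complete `t ^ k + L t ^ (k - u)` to a constant by a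
multiple of `M - t`, and the geometric sums in
`M ^ e - t ^ e = (M - t) ∑ j < e, t ^ j M ^ (e - 1 - j)` provide a multiplier with the required
positive diagonal. -/

section Coefficients

variable {σ R : Type*} [CommSemiring R]

lemma totalDegree_one_add_sum_X_le [Fintype σ] :
    (1 + ∑ v, X v : MvPolynomial σ R).totalDegree ≤ 1 :=
  (totalDegree_add _ _).trans <| max_le (totalDegree_one.trans_le zero_le_one) <|
    totalDegree_finsetSum_le fun v _ => (totalDegree_monomial_le _ _).trans (by simp)

lemma totalDegree_pow_le_of_le_one {p : MvPolynomial σ R} (hp : p.totalDegree ≤ 1) (d : ℕ) :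
    (p ^ d).totalDegree ≤ d := by
  simpa using (totalDegree_pow p d).trans (Nat.mul_le_mul_left d hp)

lemma coeff_one_add_sum_X_pow [Fintype σ] (d : ℕ) (α : σ →₀ ℕ) :
    coeff α ((1 + ∑ v, X v : MvPolynomial σ R) ^ d) =
      (d.choose α.degree * α.multinomial : ℕ) := by
  have hterm (j : ℕ) :
      coeff α ((∑ v, X v : MvPolynomial σ R) ^ j * (d.choose j : MvPolynomial σ R)) =
        if α.degree = j then ((d.choose α.degree * α.multinomial : ℕ) : R) else 0 := by
    have hdegree : (α.sum fun _ m => m) = α.degree := rfl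
    rw [← map_natCast (C : R →+* MvPolynomial σ R), mul_comm, coeff_C_mul,
      coeff_sum_X_pow_of_fintype, hdegree]
    split_ifs with hj
    · rw [← hj, Nat.cast_mul]
    · rw [Nat.cast_zero, mul_zero]
  simp only [add_comm (1 : MvPolynomial σ R), add_pow, one_pow, mul_one, coeff_sum, hterm,
    Finset.sum_ite_eq, Finset.mem_range, Nat.lt_succ_iff]
  split_ifs with hα
  · rfl
  · simp [Nat.choose_eq_zero_of_lt (not_le.1 hα)]

lemma totalDegree_geom_sum₂_C_le {p : MvPolynomial σ R} (hp : p.totalDegree ≤ 1)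
    (a : R) (e : ℕ) :
    (∑ j ∈ Finset.range e, p ^ j * C a ^ (e - 1 - j)).totalDegree ≤ e - 1 := by
  refine totalDegree_finsetSum_le fun j hj => (totalDegree_mul _ _).trans ?_
  rw [← C_pow, totalDegree_C, add_zero]
  exact (totalDegree_pow_le_of_le_one hp j).trans (Nat.le_sub_one_of_lt (Finset.mem_range.1 hj))

lemma expand_two_one_add_sum_X [Fintype σ] :
    expand 2 (1 + ∑ v, X v : MvPolynomial σ R) = 1 + ∑ v, X v ^ 2 := by
  simp only [map_add, map_one, map_sum, expand_X]

variable [PartialOrder R] [IsOrderedRing R]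

lemma one_le_coeff_one_add_sum_X_pow [Fintype σ] {d : ℕ} {α : σ →₀ ℕ} (hα : α.degree ≤ d) :
    1 ≤ coeff α ((1 + ∑ v, X v : MvPolynomial σ R) ^ d) := by
  have hpos : 0 < d.choose α.degree * α.multinomial :=
    Nat.mul_pos (Nat.choose_pos hα) (Nat.multinomial_pos _ _)
  rw [coeff_one_add_sum_X_pow]
  simpa only [Nat.cast_one] using Nat.mono_cast (α := R) hpos

lemma coeff_one_add_sum_X_pow_nonneg [Fintype σ] (d : ℕ) (α : σ →₀ ℕ) :
    0 ≤ coeff α ((1 + ∑ v, X v : MvPolynomial σ R) ^ d) := by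
  rw [coeff_one_add_sum_X_pow]
  exact Nat.cast_nonneg _

lemma coeff_geom_sum₂_C_nonneg {p : MvPolynomial σ R} {α : σ →₀ ℕ}
    (hp : ∀ j, 0 ≤ coeff α (p ^ j)) {a : R} (ha : 0 ≤ a) (e : ℕ) :
    0 ≤ coeff α (∑ j ∈ Finset.range e, p ^ j * C a ^ (e - 1 - j)) := by
  simp only [coeff_sum, ← C_pow, mul_comm _ (C _), coeff_C_mul]
  exact Finset.sum_nonneg fun j _ => mul_nonneg (pow_nonneg ha _) (hp j)

lemma coeff_pow_le_coeff_geom_sum₂_C {p : MvPolynomial σ R} {α : σ →₀ ℕ}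
    (hp : ∀ j, 0 ≤ coeff α (p ^ j)) {a : R} (ha : 0 ≤ a) (d : ℕ) :
    coeff α (p ^ d) ≤ coeff α (∑ j ∈ Finset.range (d + 1), p ^ j * C a ^ (d + 1 - 1 - j)) := by
  simp only [coeff_sum, ← C_pow, mul_comm _ (C _), coeff_C_mul]
  simpa using Finset.single_le_sum (f := fun j => a ^ (d + 1 - 1 - j) * coeff α (p ^ j))
    (fun j _ => mul_nonneg (pow_nonneg ha _) (hp j)) (Finset.self_mem_range_succ d)

end Coefficients

section DiagonalForms

variable {n d : ℕ}

lemma mem_degLE {α : Fin n →₀ ℕ} : α ∈ degLE n d ↔ α.degree ≤ d := by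
  rw [degLE, Finset.mem_filter, ← Finsupp.degree_eq_sum, and_iff_right_iff_imp, Finset.mem_Iic]
  exact fun hα v => (Finsupp.le_degree v α).trans hα

lemma quadForm_diagonal_coeff {q : MvPolynomial (Fin n) ℝ} (hq : q.totalDegree ≤ d) :
    quadForm n d (Matrix.diagonal fun α => coeff α.1 q) = expand 2 q := by
  have hsupport : q.support ⊆ degLE n d := fun α hα =>
    mem_degLE.2 ((le_totalDegree hα).trans hq)
  have hrow (α : degLE n d) :
      ∑ β : degLE n d, monomial (α.1 + β.1) (Matrix.diagonal (fun α => coeff α.1 q) α β) =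
        expand 2 (monomial α.1 (coeff α.1 q)) := by
    rw [Finset.sum_eq_single_of_mem α (Finset.mem_univ α) fun β _ hβ => by
      rw [Matrix.diagonal_apply_ne _ hβ.symm, monomial_zero],
      Matrix.diagonal_apply_eq, expand_monomial, two_smul]
  calc quadForm n d (Matrix.diagonal fun α => coeff α.1 q)
      = ∑ α ∈ degLE n d, expand 2 (monomial α (coeff α q)) := by
        rw [quadForm, Finset.sum_congr rfl fun α _ => hrow α]
        exact Finset.sum_coe_sort (degLE n d) fun α => expand 2 (monomial α (coeff α q))
    _ = ∑ α ∈ q.support, expand 2 (monomial α (coeff α q)) :=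
        (Finset.sum_subset hsupport fun α _ hα => by
          rw [notMem_support_iff.1 hα, monomial_zero, map_zero]).symm
    _ = expand 2 q := by rw [← map_sum, ← as_sum]

/-- `p` is a diagonal quadratic form `v_dᵀ G v_d` in the monomials of degree at most `d`, with all
diagonal entries of `G` at least `1`: the admissible multipliers of a certificate. -/
def IsDiagGE1Form (n d : ℕ) (p : MvPolynomial (Fin n) ℝ) : Prop :=
  ∃ G : Matrix ↥(degLE n d) ↥(degLE n d) ℝ, DiagGE1 G ∧ quadForm n d G = p

lemma IsDiagGE1Form.expand_two {q : MvPolynomial (Fin n) ℝ} (hdeg : q.totalDegree ≤ d)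
    (hcoeff : ∀ α : Fin n →₀ ℕ, α.degree ≤ d → 1 ≤ coeff α q) :
    IsDiagGE1Form n d (expand 2 q) :=
  ⟨Matrix.diagonal fun α => coeff α.1 q,
    ⟨fun _ _ => Matrix.diagonal_apply_ne _,
      fun α => by simpa using hcoeff α.1 (mem_degLE.1 α.2)⟩,
    quadForm_diagonal_coeff hdeg⟩

lemma isDiagGE1Form_one_add_sum_sq_pow (n d : ℕ) :
    IsDiagGE1Form n d ((1 + ∑ v, X v ^ 2) ^ d) := by
  rw [← expand_two_one_add_sum_X, ← map_pow]
  exact .expand_two (totalDegree_pow_le_of_le_one totalDegree_one_add_sum_X_le d) fun _ =>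
    one_le_coeff_one_add_sum_X_pow

lemma isDiagGE1Form_geom_sum₂ {M L : ℝ} (hM : 0 ≤ M) (hL : 0 ≤ L) {e : ℕ} (he : e ≤ d + 1) :
    IsDiagGE1Form n d
      (∑ j ∈ Finset.range (d + 1), (1 + ∑ v, X v ^ 2) ^ j * C M ^ (d + 1 - 1 - j) +
        C L * ∑ j ∈ Finset.range e, (1 + ∑ v, X v ^ 2) ^ j * C M ^ (e - 1 - j)) := by
  let p : MvPolynomial (Fin n) ℝ := 1 + ∑ v, X v
  let geomSum : ℕ → MvPolynomial (Fin n) ℝ :=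
    fun e => ∑ j ∈ Finset.range e, p ^ j * C M ^ (e - 1 - j)
  have hgeomSum_deg (e : ℕ) : (geomSum e).totalDegree ≤ e - 1 :=
    totalDegree_geom_sum₂_C_le totalDegree_one_add_sum_X_le M e
  have hdeg : (geomSum (d + 1) + C L * geomSum e).totalDegree ≤ d := by
    refine (totalDegree_add _ _).trans (max_le (hgeomSum_deg (d + 1)) ?_)
    rw [← smul_eq_C_mul]
    exact (totalDegree_smul_le _ _).trans ((hgeomSum_deg e).trans (by omega))
  have hcoeff (α : Fin n →₀ ℕ) (hα : α.degree ≤ d) :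
      1 ≤ coeff α (geomSum (d + 1) + C L * geomSum e) := by
    have hpow (j : ℕ) : 0 ≤ coeff α (p ^ j) := coeff_one_add_sum_X_pow_nonneg j α
    rw [coeff_add, coeff_C_mul]
    calc 1 ≤ coeff α (p ^ d) := one_le_coeff_one_add_sum_X_pow hα
      _ ≤ coeff α (geomSum (d + 1)) := coeff_pow_le_coeff_geom_sum₂_C hpow hM d
      _ ≤ coeff α (geomSum (d + 1)) + L * coeff α (geomSum e) :=
        le_add_of_nonneg_right (mul_nonneg hL (coeff_geom_sum₂_C_nonneg hpow hM e))
  have hexpand : expand 2 p = 1 + ∑ v, X v ^ 2 := expand_two_one_add_sum_X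
  simpa only [geomSum, map_add, map_sum, map_mul, map_pow, expand_C, hexpand]
    using IsDiagGE1Form.expand_two hdeg hcoeff

end DiagonalForms

section CertificateIdentity

variable {A : Type*} [CommRing A]

lemma sum_mul_pow_add_sub_sum_mul_pow {ι : Type*} [Fintype ι] (g : ι → A) {e : ι → ℕ} {u k : ℕ}
    (he : ∀ i, e i ≤ u) (hu : u ≤ k) (t L : A) :
    ∑ i, g i * t ^ (k - e i) + (L - ∑ i, g i * t ^ (u - e i)) * t ^ (k - u) =
      L * t ^ (k - u) := by
  have hsplit (i : ι) : g i * t ^ (k - e i) = g i * t ^ (u - e i) * t ^ (k - u) := by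
    rw [mul_assoc, ← pow_add]
    congr 2
    have := he i
    omega
  rw [Finset.sum_congr rfl fun i _ => hsplit i, ← Finset.sum_mul]
  ring

lemma pow_add_mul_pow_add_sub_mul_geom_sum₂ (t M L : A) (d e : ℕ) :
    t ^ d + L * t ^ e + (M - t) *
        (∑ j ∈ Finset.range d, t ^ j * M ^ (d - 1 - j) +
          L * ∑ j ∈ Finset.range e, t ^ j * M ^ (e - 1 - j)) =
      M ^ d + L * M ^ e := by
  linear_combination -geom_sum₂_mul t M d - L * geom_sum₂_mul t M e

lemma sum_mul_pow_certificate {ι : Type*} [Fintype ι] (g : ι → A) {e : ι → ℕ} {u k d : ℕ}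
    (he : ∀ i, e i ≤ u) (hu : u ≤ k) {t : A} (ht : t ^ k = t ^ d) (M L : A) :
    t ^ k + ∑ i, g i * t ^ (k - e i) + (L - ∑ i, g i * t ^ (u - e i)) * t ^ (k - u) +
        (M - t) * (∑ j ∈ Finset.range d, t ^ j * M ^ (d - 1 - j) +
          L * ∑ j ∈ Finset.range (k - u), t ^ j * M ^ (k - u - 1 - j)) =
      M ^ d + L * M ^ (k - u) := by
  rw [add_assoc (t ^ k), sum_mul_pow_add_sub_sum_mul_pow g he hu, ht,
    pow_add_mul_pow_add_sub_mul_geom_sum₂]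

end CertificateIdentity

lemma C_sub_sum_sq_eq_C_sub_one_add_sum_sq {σ R : Type*} [Fintype σ] [CommRing R] (r : R) :
    (C r - ∑ v, X v ^ 2 : MvPolynomial σ R) = C (r + 1) - (1 + ∑ v, X v ^ 2) := by
  rw [C_add, C_1]
  ring

-- Truncated subtraction makes `k - 1 + 1 = 1` when `k = 0`; there the degree bound forces
-- `‖x‖² = 0`, so that every power of `1 + ‖x‖²` is `1`.
lemma one_add_sum_sq_pow_eq_of_halfCeil_le {n k : ℕ} {R : ℝ}
    (hk : halfCeil (C R - ∑ v, X v ^ 2 : MvPolynomial (Fin n) ℝ) ≤ k) :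
    (1 + ∑ v, X v ^ 2 : MvPolynomial (Fin n) ℝ) ^ k = (1 + ∑ v, X v ^ 2) ^ (k - 1 + 1) := by
  rcases k with _ | k
  · have hdeg : (C R - ∑ v, X v ^ 2 : MvPolynomial (Fin n) ℝ).totalDegree = 0 := by
      rw [halfCeil] at hk
      omega
    have hconst := totalDegree_eq_zero_iff_eq_C.1 hdeg
    have hsum : (∑ v, X v ^ 2 : MvPolynomial (Fin n) ℝ) = 0 := by
      simpa [← constantCoeff_eq] using hconst
    simp [hsum]
  · rfl

/-- Let `S(g) ⊆ {‖x‖₂² ≤ R}`, `u := max_i ⌈g_i⌉`,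
`g̃_i := g_i (1+‖x‖₂²)^{u-⌈g_i⌉}`, `L > 0` with `Σ_i g̃_i ≤ L` on `S(g)`,
`g̃_{m+1} := L − Σ_i g̃_i` and `g̃_{m+2} := R − ‖x‖₂²`.  Then (a) adding the two redundant
constraints does not change the feasible set, and (b) the LP (14) for the enlarged family is
feasible at every relaxation order `k`. -/
theorem stmt8 (n m l : ℕ)
    (g : Fin m → MvPolynomial (Fin n) ℝ) (h : Fin l → MvPolynomial (Fin n) ℝ)
    (R : ℝ) (hR : 0 < R)
    (hSball : ∀ x : Fin n → ℝ, (∀ i, 0 ≤ eval x (g i)) → (∑ v, x v ^ 2) ≤ R)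
    (u : ℕ) (hu : u = Finset.univ.sup fun i => halfCeil (g i))
    (gt : Fin m → MvPolynomial (Fin n) ℝ)
    (hgt : ∀ i, gt i = g i * (1 + ∑ v, X v ^ 2) ^ (u - halfCeil (g i)))
    (L : ℝ) (hL : 0 < L)
    (hLbig : ∀ x : Fin n → ℝ, (∀ i, 0 ≤ eval x (g i)) → (∑ i, eval x (gt i)) ≤ L)
    (gm1 gm2 : MvPolynomial (Fin n) ℝ)
    (hgm1 : gm1 = C L - ∑ i, gt i) (hgm2 : gm2 = C R - ∑ v, X v ^ 2) :
    ({x : Fin n → ℝ | (∀ i, 0 ≤ eval x (g i)) ∧ 0 ≤ eval x gm1 ∧ 0 ≤ eval x gm2}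
        = {x : Fin n → ℝ | ∀ i, 0 ≤ eval x (g i)}) ∧
    (∀ k : ℕ, (∀ i, halfCeil (g i) ≤ k) → halfCeil gm1 ≤ k → halfCeil gm2 ≤ k →
      (∀ j, halfCeil (h j) ≤ k) →
      ∃ ξ : ℝ, 0 < ξ ∧
      ∃ G0 : Matrix ↥(degLE n k) ↥(degLE n k) ℝ, DiagGE1 G0 ∧
      ∃ G : ∀ i : Fin m,
          Matrix ↥(degLE n (k - halfCeil (g i))) ↥(degLE n (k - halfCeil (g i))) ℝ,
        (∀ i, DiagGE1 (G i)) ∧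
      ∃ Gm1 : Matrix ↥(degLE n (k - u)) ↥(degLE n (k - u)) ℝ, DiagGE1 Gm1 ∧
      ∃ Gm2 : Matrix ↥(degLE n (k - 1)) ↥(degLE n (k - 1)) ℝ, DiagGE1 Gm2 ∧
      ∃ ψ : Fin l → MvPolynomial (Fin n) ℝ,
        (∀ j, (ψ j).totalDegree ≤ 2 * (k - halfCeil (h j))) ∧
        (C ξ : MvPolynomial (Fin n) ℝ)
          = quadForm n k G0 + (∑ i, g i * quadForm n (k - halfCeil (g i)) (G i))
            + gm1 * quadForm n (k - u) Gm1
            + gm2 * quadForm n (k - 1) Gm2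
            + ∑ j, h j * ψ j) := by
  subst hgm1 hgm2
  obtain rfl : gt = _ := funext hgt
  refine ⟨?_, fun k hgk _ hk _ => ?_⟩
  · ext x
    refine ⟨And.left, fun hx => ⟨hx, ?_, ?_⟩⟩
    · simpa using hLbig x hx
    · simpa using hSball x hx
  · have hgu (i : Fin m) : halfCeil (g i) ≤ u :=
      hu ▸ Finset.le_sup (f := fun i => halfCeil (g i)) (Finset.mem_univ i)
    have huk : u ≤ k := hu ▸ Finset.sup_le fun i _ => hgk i
    obtain ⟨G0, hG0, hG0_eq⟩ := isDiagGE1Form_one_add_sum_sq_pow n k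
    choose G hG hG_eq using fun i => isDiagGE1Form_one_add_sum_sq_pow n (k - halfCeil (g i))
    obtain ⟨Gm1, hGm1, hGm1_eq⟩ := isDiagGE1Form_one_add_sum_sq_pow n (k - u)
    obtain ⟨Gm2, hGm2, hGm2_eq⟩ := isDiagGE1Form_geom_sum₂ (n := n) (d := k - 1)
      (add_pos hR one_pos).le hL.le (show k - u ≤ k - 1 + 1 by omega)
    refine ⟨(R + 1) ^ (k - 1 + 1) + L * (R + 1) ^ (k - u), by positivity, G0, hG0, G, hG,
      Gm1, hGm1, Gm2, hGm2, 0, by simp, ?_⟩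
    have hcertificate := sum_mul_pow_certificate g hgu huk
      (one_add_sum_sq_pow_eq_of_halfCeil_le hk) (C (R + 1)) (C L)
    simpa only [hG0_eq, hG_eq, hGm1_eq, hGm2_eq, C_sub_sum_sq_eq_C_sub_one_add_sum_sq,
      Pi.zero_apply, mul_zero, Finset.sum_const_zero, add_zero, C_add, C_mul, C_pow]
      using hcertificate.symm
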